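/- Suprema and infima are 1-Lipschitz with respect to d_max: for every nonempty index set ι and all families f, g : ι → [0,1], d_max(sup_{i∈ι} f(i), sup_{i∈ι} g(i)) ≤ sup_{i∈ι} d_max(f(i), g(i)) and d_max(inf_{i∈ι} f(i), inf_{i∈ι} g(i)) ≤ sup_{i∈ι} d_max(f(i), g(i)), where all suprema and infima are taken in the complete lattice [0,1]. -/

import Mathlib

open Set unitInterval

instance : Fact ((0:ℝ) ≤ 1) := ⟨zero_le_one⟩

/-- `d_max` on the complete lattice `[0,1]`:
`d_max(x,y) = 0` if `x = y`, and `max x y` otherwise. -/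
noncomputable def dmaxI (x y : unitInterval) : unitInterval :=
  if x = y then 0 else max x y

/-!
In a linear order with bottom, `d_max(x, y) ≤ c` says exactly that `x` and `y` become equal once
they are truncated from below at `c`, i.e. `x ⊔ c = y ⊔ c`. So an operation is 1-Lipschitz for
`d_max` as soon as it commutes with every truncation `· ⊔ c`; nonempty suprema always do, and
infima do because a complete linear order is a coframe.
-/

/-- The distance `d_max` on a linear order with least element `⊥` in the role of `0`; it takes
values in the order itself. -/
def dmax {α : Type*} [LinearOrder α] [OrderBot α] (x y : α) : α :=
  if x = y then ⊥ else x ⊔ y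

theorem dmax_le_iff_sup_eq_sup {α : Type*} [LinearOrder α] [OrderBot α] {x y c : α} :
    dmax x y ≤ c ↔ x ⊔ c = y ⊔ c := by
  rw [sup_eq_sup_iff_right, le_sup_iff, le_sup_iff]
  rcases lt_trichotomy x y with hlt | rfl | hgt
  · simp [dmax, hlt.ne, hlt.le, hlt.not_ge]
  · simp [dmax]
  · simp [dmax, hgt.ne', hgt.le, hgt.not_ge]

section CompleteLinearOrder

variable {α : Type*} [CompleteLinearOrder α] {ι : Sort*} {f g : ι → α} {c : α}

theorem dmax_iSup_le (h : ∀ i, dmax (f i) (g i) ≤ c) : dmax (⨆ i, f i) (⨆ i, g i) ≤ c := by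
  simp only [dmax_le_iff_sup_eq_sup] at h ⊢
  cases isEmpty_or_nonempty ι
  · simp only [iSup_of_empty]
  · simp only [iSup_sup, h]

theorem dmax_iInf_le (h : ∀ i, dmax (f i) (g i) ≤ c) : dmax (⨅ i, f i) (⨅ i, g i) ≤ c := by
  simp only [dmax_le_iff_sup_eq_sup] at h ⊢
  simp only [iInf_sup_eq, h]

end CompleteLinearOrder

theorem iSup_iInf_lipschitz_general {α : Type*} [CompleteLinearOrder α] {ι : Sort*}
    (f g : ι → α) :
    dmax (⨆ i, f i) (⨆ i, g i) ≤ ⨆ i, dmax (f i) (g i) ∧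
    dmax (⨅ i, f i) (⨅ i, g i) ≤ ⨆ i, dmax (f i) (g i) :=
  have le_iSup_dmax : ∀ i, dmax (f i) (g i) ≤ ⨆ j, dmax (f j) (g j) :=
    le_iSup fun j ↦ dmax (f j) (g j)
  ⟨dmax_iSup_le le_iSup_dmax, dmax_iInf_le le_iSup_dmax⟩

theorem dmaxI_eq_dmax : dmaxI = dmax := rfl

/-- Suprema and infima over a nonempty index set are 1-Lipschitz with respect
to `d_max`, all suprema and infima being taken in the complete lattice `[0,1]`. -/
theorem iSup_iInf_lipschitz {ι : Type*} [Nonempty ι] (f g : ι → unitInterval) :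
    dmaxI (⨆ i, f i) (⨆ i, g i) ≤ ⨆ i, dmaxI (f i) (g i) ∧
    dmaxI (⨅ i, f i) (⨅ i, g i) ≤ ⨆ i, dmaxI (f i) (g i) := by
  rw [dmaxI_eq_dmax]
  exact iSup_iInf_lipschitz_general f g
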